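/- For every N ∈ ℕ, the characteristic polynomial of the Sylvester–Kac matrix K_{2N+2} (of size (2N+3)×(2N+3)) is the product of the characteristic polynomials of G_N and S_{N+1}: det(x·I_{2N+3} − K_{2N+2}) = det(x·I_{N+1} − G_N) · det(x·I_{N+2} − S_{N+1}) as polynomials in x. -/

import Mathlib

open Matrix Polynomial

/-- The Sylvester–Kac matrix `K_M` over `ℚ`. -/
def Kmat (M : ℕ) : Matrix (Fin (M+1)) (Fin (M+1)) ℚ :=
  Matrix.of fun k l =>
    if (l : ℕ) = (k : ℕ) + 1 then ((k : ℕ) + 1 : ℚ)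
    else if (l : ℕ) + 1 = (k : ℕ) then ((M - (k : ℕ) + 1 : ℕ) : ℚ)
    else 0

/-- The matrix `G_N`, over `ℚ`. -/
def Gmat (N : ℕ) : Matrix (Fin (N+1)) (Fin (N+1)) ℚ :=
  Matrix.of fun k l =>
    if (l : ℕ) = (k : ℕ) + 1 then ((k : ℕ) + 1 : ℚ)
    else if (l : ℕ) + 1 = (k : ℕ) then ((2 * N + 3 - (k : ℕ) : ℕ) : ℚ)
    else 0

/-- The matrix `S_N`, over `ℚ`. -/
def Smat (N : ℕ) : Matrix (Fin (N+1)) (Fin (N+1)) ℚ :=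
  Matrix.of fun k l =>
    if (l : ℕ) = (k : ℕ) + 1 then
      (if (k : ℕ) = N - 1 then (2 * N : ℚ) else ((k : ℕ) + 1 : ℚ))
    else if (l : ℕ) + 1 = (k : ℕ) then ((2 * N + 1 - (k : ℕ) : ℕ) : ℚ)
    else 0

theorem Kmat_rev_rev (M : ℕ) (k l : Fin (M + 1)) : Kmat M k.rev l.rev = Kmat M k l := by
  have hk := k.isLt
  have hl := l.isLt
  simp only [Kmat, Matrix.of_apply, Fin.val_rev]
  split_ifs <;> first | omega | rfl | (norm_cast; omega)

theorem Kmat_rev_left (M : ℕ) (k l : Fin (M + 1)) : Kmat M k.rev l = Kmat M k l.rev := by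
  rw [← Kmat_rev_rev, Fin.rev_rev]

/-- The embedding of `{0, …, N}` as the first indices of `K_{2N+2}`. -/
def lowIndex (N : ℕ) (k : Fin (N + 1)) : Fin (2 * N + 2 + 1) := k.castLE (by omega)

/-- The embedding of `{0, …, N + 1}` as the first indices of `K_{2N+2}`. -/
def midIndex (N : ℕ) (k : Fin (N + 1 + 1)) : Fin (2 * N + 2 + 1) := k.castLE (by omega)

/-- Rows spanning the antisymmetric and the symmetric row vectors for the index reversal. -/
def foldMat (N : ℕ) : Matrix (Fin (N + 1) ⊕ Fin (N + 1 + 1)) (Fin (2 * N + 2 + 1)) ℚ :=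
  Matrix.of fun i r => Sum.elim
    (fun k => (if r = lowIndex N k then 1 else 0) - (if r = (lowIndex N k).rev then 1 else 0))
    (fun k : Fin (N + 1 + 1) => (if (k : ℕ) = N + 1 then 1 / 2 else 1) *
      ((if r = midIndex N k then 1 else 0) + (if r = (midIndex N k).rev then 1 else 0))) i

/-- The inverse of `foldMat`. -/
def unfoldMat (N : ℕ) : Matrix (Fin (2 * N + 2 + 1)) (Fin (N + 1) ⊕ Fin (N + 1 + 1)) ℚ :=
  Matrix.of fun r i => Sum.elim
    (fun k => 1 / 2 *
      ((if r = lowIndex N k then 1 else 0) - (if r = (lowIndex N k).rev then 1 else 0)))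
    (fun k => 1 / 2 *
      ((if r = midIndex N k then 1 else 0) + (if r = (midIndex N k).rev then 1 else 0))) i

section

variable {n : Type*} (N : ℕ)

theorem foldMat_mul_inl (A : Matrix (Fin (2 * N + 2 + 1)) n ℚ) (k : Fin (N + 1)) (j : n) :
    (foldMat N * A) (Sum.inl k) j = A (lowIndex N k) j - A (lowIndex N k).rev j := by
  simp [foldMat, Matrix.mul_apply, sub_mul, Finset.sum_sub_distrib]

theorem foldMat_mul_inr (A : Matrix (Fin (2 * N + 2 + 1)) n ℚ) (k : Fin (N + 1 + 1)) (j : n) :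
    (foldMat N * A) (Sum.inr k) j = (if (k : ℕ) = N + 1 then 1 / 2 else 1) *
      (A (midIndex N k) j + A (midIndex N k).rev j) := by
  simp only [foldMat, Matrix.mul_apply, Matrix.of_apply, Sum.elim_inr, mul_assoc,
    ← Finset.mul_sum]
  simp [add_mul, Finset.sum_add_distrib]

theorem mul_unfoldMat_inl (A : Matrix n (Fin (2 * N + 2 + 1)) ℚ) (i : n) (k : Fin (N + 1)) :
    (A * unfoldMat N) i (Sum.inl k) =
      1 / 2 * (A i (lowIndex N k) - A i (lowIndex N k).rev) := by
  simp only [unfoldMat, Matrix.mul_apply, Matrix.of_apply, Sum.elim_inl,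
    mul_left_comm _ (1 / 2 : ℚ), ← Finset.mul_sum]
  simp [mul_sub, Finset.sum_sub_distrib]

theorem mul_unfoldMat_inr (A : Matrix n (Fin (2 * N + 2 + 1)) ℚ) (i : n)
    (k : Fin (N + 1 + 1)) :
    (A * unfoldMat N) i (Sum.inr k) =
      1 / 2 * (A i (midIndex N k) + A i (midIndex N k).rev) := by
  simp only [unfoldMat, Matrix.mul_apply, Matrix.of_apply, Sum.elim_inr,
    mul_left_comm _ (1 / 2 : ℚ), ← Finset.mul_sum]
  simp [mul_add, Finset.sum_add_distrib]

theorem foldMat_mul_unfoldMat : foldMat N * unfoldMat N = 1 := by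
  ext (k | k) (j | j) <;> have hk := k.isLt <;> have hj := j.isLt
  · rw [foldMat_mul_inl]
    simp only [unfoldMat, Matrix.of_apply, Sum.elim_inl, Matrix.one_apply, Sum.inl.injEq,
      Fin.ext_iff, Fin.val_rev, lowIndex, Fin.val_castLE]
    split_ifs <;> first | omega | norm_num
  · rw [foldMat_mul_inl]
    simp only [unfoldMat, Matrix.of_apply, Sum.elim_inr, Matrix.one_apply, reduceCtorEq, if_false,
      Fin.ext_iff, Fin.val_rev, lowIndex, midIndex, Fin.val_castLE]
    split_ifs <;> first | omega | norm_num
  · rw [foldMat_mul_inr]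
    simp only [unfoldMat, Matrix.of_apply, Sum.elim_inl, Matrix.one_apply, reduceCtorEq, if_false,
      Fin.ext_iff, Fin.val_rev, lowIndex, midIndex, Fin.val_castLE]
    split_ifs <;> first | omega | norm_num
  · rw [foldMat_mul_inr]
    simp only [unfoldMat, Matrix.of_apply, Sum.elim_inr, Matrix.one_apply, Sum.inr.injEq,
      Fin.ext_iff, Fin.val_rev, midIndex, Fin.val_castLE]
    split_ifs <;> first | omega | norm_num

theorem foldMat_mul_Kmat_mul_unfoldMat :
    foldMat N * (Kmat (2 * N + 2) * unfoldMat N) =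
      Matrix.fromBlocks (Gmat N) 0 0 (Smat (N + 1)) := by
  ext (k | k) (j | j) <;> have hk := k.isLt <;> have hj := j.isLt
  · rw [foldMat_mul_inl, mul_unfoldMat_inl, mul_unfoldMat_inl, Kmat_rev_rev, Kmat_rev_left]
    have h : Kmat (2 * N + 2) (lowIndex N k) (lowIndex N j).rev = 0 := by
      simp only [Kmat, Matrix.of_apply, Fin.val_rev, lowIndex, Fin.val_castLE]
      split_ifs <;> first | omega | rfl
    have h' : Kmat (2 * N + 2) (lowIndex N k) (lowIndex N j) = Gmat N k j := by
      simp only [Kmat, Gmat, Matrix.of_apply, lowIndex, Fin.val_castLE]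
      split_ifs <;> first | rfl | (norm_cast; omega)
    rw [h, h', Matrix.fromBlocks_apply₁₁]
    ring
  · rw [foldMat_mul_inl, mul_unfoldMat_inr, mul_unfoldMat_inr, Kmat_rev_rev, Kmat_rev_left,
      Matrix.fromBlocks_apply₁₂, Matrix.zero_apply]
    ring
  · rw [foldMat_mul_inr, mul_unfoldMat_inl, mul_unfoldMat_inl, Kmat_rev_rev, Kmat_rev_left,
      Matrix.fromBlocks_apply₂₁, Matrix.zero_apply]
    ring
  · rw [foldMat_mul_inr, mul_unfoldMat_inr, mul_unfoldMat_inr, Kmat_rev_rev, Kmat_rev_left,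
      Matrix.fromBlocks_apply₂₂]
    have e : 2 * N + 2 - (k : ℕ) + 1 = 2 * (N + 1) + 1 - k := by omega
    have e' : ((2 * (N + 1) + 1 - k : ℕ) : ℚ) = 2 * (N + 1) + 1 - k := by
      rw [Nat.cast_sub (by omega)]
      push_cast
      rfl
    simp only [Kmat, Smat, Matrix.of_apply, Fin.val_rev, midIndex, Fin.val_castLE, e]
    split_ifs with h₁ <;> first
      | omega
      | ring1
      | (have hk' : (k : ℚ) = N := congrArg Nat.cast (by omega)
         rw [hk']; push_cast; ring1)
      | (have hk' : (k : ℚ) = N + 1 := by exact_mod_cast h₁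
         rw [e', hk']; ring1)

end

theorem stmt_13 (N : ℕ) :
    (Kmat (2 * N + 2)).charpoly = (Gmat N).charpoly * (Smat (N + 1)).charpoly := by
  rw [← Matrix.charpoly_fromBlocks_zero₁₂ (M₂₁ := 0), ← foldMat_mul_Kmat_mul_unfoldMat]
  have hcard : Fintype.card (Fin (N + 1) ⊕ Fin (N + 1 + 1)) =
      Fintype.card (Fin (2 * N + 2 + 1)) := by
    simp only [Fintype.card_sum, Fintype.card_fin]
    omega
  have hinv : unfoldMat N * foldMat N = 1 :=
    (Matrix.mul_eq_one_comm_of_card_eq _ _ _ hcard).1 (foldMat_mul_unfoldMat N)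
  have h := Matrix.charpoly_mul_comm' (foldMat N) (Kmat (2 * N + 2) * unfoldMat N)
  rw [hcard, Matrix.mul_assoc (Kmat _), hinv, Matrix.mul_one] at h
  exact (mul_left_cancel₀ (pow_ne_zero _ Polynomial.X_ne_zero) h).symm
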